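/- Let n be a positive integer, let P be a real polynomial of degree ≤ n with sup_{x∈[-1,1]} |P(x)| ≤ 1, let δ > 0, let E ⊂ [-1,1] be a measurable set with |E| > 0 such that sup_{x∈E} |P(x)| ≤ e^{-δ n}, let I be an interval with E ⊂ I ⊂ [-1,1], and set η = |I|/|E|. Then for every integer k ≥ 0, sup_{x∈I} |P(x)| ≤ (4η)^k · ( e^{-δ n} + ( e |I| n² / (k+1)² )^{k+1} ). -/

import Mathlib

/-!
Interpolate `P` at `k + 1` points of the closure of `E`. Since `t ↦ |closure E ∩ (-∞, t]|` is
1-Lipschitz and maps `closure E` onto `[0, |closure E|]`, the extrema of the Chebyshev polynomial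
`T_k`, rescaled to that interval, lift to nodes in `closure E` that are at least as far apart. The
interpolant is then controlled by the sum of the absolute nodal weights of the Chebyshev extrema,
which is the leading coefficient of `T_k`. The interpolation error is controlled by the derivative
of `P` of order `j = k + 1`. At the endpoint `1` it is at most `T_n^(j)(1)`, and the affine maps of
`[-1, 1]` into itself taking `1` to `x` carry this bound to every `x`, at the cost of a factor
`2 ^ j`. Stirling's formula gives the constant `e`.
-/

open MeasureTheory Set

section Interpolation

open Polynomial Lagrange
open scoped Nat

theorem exists_iteratedDeriv_eq_zero_of_strictMono {n : ℕ} {f : ℝ → ℝ} (hf : ContDiff ℝ n f)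
    {z : Fin (n + 1) → ℝ} (hz : StrictMono z) (hfz : ∀ i, f (z i) = 0) :
    ∃ ξ ∈ Icc (z 0) (z (Fin.last n)), iteratedDeriv n f ξ = 0 := by
  induction n generalizing f with
  | zero => exact ⟨z 0, by simp, by simpa using hfz 0⟩
  | succ n ih =>
    have rolle (i : Fin (n + 1)) : ∃ w ∈ Ioo (z i.castSucc) (z i.succ), deriv f w = 0 :=
      exists_deriv_eq_zero (hz i.castSucc_lt_succ) hf.continuous.continuousOn (by rw [hfz, hfz])
    choose w hw hfw using rolle
    have hw_mono : StrictMono w :=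
      Fin.strictMono_iff_lt_succ.2 fun i ↦ (hw i.castSucc).2.trans (hw i.succ).1
    obtain ⟨ξ, hξ, hfξ⟩ := ih (contDiff_succ_iff_deriv.1 hf).2.2 hw_mono hfw
    exact ⟨ξ, ⟨(hw 0).1.le.trans hξ.1, hξ.2.trans (hw (Fin.last n)).2.le⟩,
      by rw [iteratedDeriv_succ', hfξ]⟩

theorem exists_iteratedDeriv_eq_zero_of_card_eq {n : ℕ} {f : ℝ → ℝ} (hf : ContDiff ℝ n f)
    {I : Set ℝ} [I.OrdConnected] {s : Finset ℝ} (hs : s.card = n + 1) (hsI : ∀ z ∈ s, z ∈ I)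
    (hfs : ∀ z ∈ s, f z = 0) :
    ∃ ξ ∈ I, iteratedDeriv n f ξ = 0 := by
  obtain ⟨ξ, hξ, hfξ⟩ := exists_iteratedDeriv_eq_zero_of_strictMono hf
    (s.orderEmbOfFin hs).strictMono fun i ↦ hfs _ (s.orderEmbOfFin_mem hs i)
  exact ⟨ξ, OrdConnected.out ‹_› (hsI _ (s.orderEmbOfFin_mem hs _))
    (hsI _ (s.orderEmbOfFin_mem hs _)) hξ, hfξ⟩

theorem iteratedDeriv_polynomial_eval (P : ℝ[X]) (n : ℕ) (x : ℝ) :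
    iteratedDeriv n (fun z ↦ P.eval z) x = (derivative^[n] P).eval x := by
  induction n generalizing P with
  | zero => simp
  | succ n ih =>
    have hderiv : deriv (fun z ↦ P.eval z) = fun z ↦ P.derivative.eval z :=
      funext fun _ ↦ P.deriv
    rw [iteratedDeriv_succ', hderiv, ih, Function.iterate_succ_apply]

theorem iterate_derivative_eq_C_of_natDegree_le {R : Type*} [Semiring R] {P : R[X]} {n : ℕ}
    (hP : P.natDegree ≤ n) : derivative^[n] P = C (n ! * P.coeff n) := by
  have hdeg : (derivative^[n] P).natDegree ≤ 0 :=
    (P.natDegree_iterate_derivative n).trans (by omega)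
  rw [eq_C_of_natDegree_le_zero hdeg, coeff_iterate_derivative, zero_add, Nat.descFactorial_self,
    nsmul_eq_mul]

variable {ι : Type*}

theorem iterate_derivative_nodal {R : Type*} [CommRing R] [Nontrivial R] (s : Finset ι)
    (v : ι → R) : derivative^[s.card] (nodal s v) = C (s.card ! : R) := by
  have hcoeff : (nodal s v).coeff s.card = 1 := by
    simpa only [natDegree_nodal] using (nodal_monic (s := s) (v := v)).coeff_natDegree
  rw [iterate_derivative_eq_C_of_natDegree_le natDegree_nodal.le, hcoeff, mul_one]

variable {F : Type*} [Field F] [LinearOrder F] [IsStrictOrderedRing F] {u v : ι → F} {c : F}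

theorem injOn_of_mul_abs_sub_le (hc : 0 < c) {s : Set ι} (hu : InjOn u s)
    (h : ∀ i ∈ s, ∀ j ∈ s, c * |u i - u j| ≤ |v i - v j|) : InjOn v s := by
  intro i hi j hj hij
  have hle : c * |u i - u j| ≤ 0 := by simpa [hij] using h i hi j hj
  exact hu hi hj (sub_eq_zero.1 (abs_nonpos_iff.1 (nonpos_of_mul_nonpos_right hle hc)))

variable {s : Finset ι} {x L : F}

theorem abs_eval_nodal_le (h : ∀ i ∈ s, |x - v i| ≤ L) : |(nodal s v).eval x| ≤ L ^ s.card := by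
  rw [eval_nodal, Finset.abs_prod, ← Finset.prod_const]
  exact Finset.prod_le_prod (fun _ _ ↦ abs_nonneg _) h

variable [DecidableEq ι]

theorem abs_eval_interpolate_le {r : ι → F} {ε : F} (hr : ∀ i ∈ s, |r i| ≤ ε)
    (hL : ∀ i ∈ s, |x - v i| ≤ L) :
    |(interpolate s v r).eval x| ≤ ε * L ^ (s.card - 1) * ∑ i ∈ s, |nodalWeight s v i| := by
  have hbasis : ∀ i ∈ s,
      |(Lagrange.basis s v i).eval x| ≤ L ^ (s.card - 1) * |nodalWeight s v i| := by
    intro i hi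
    rw [basis_eq_prod_sub_inv_mul_nodal_div hi, ← nodal_erase_eq_nodal_div hi, eval_mul, eval_C,
      abs_mul, mul_comm, ← Finset.card_erase_of_mem hi]
    gcongr
    exact abs_eval_nodal_le fun j hj ↦ hL j (Finset.mem_of_mem_erase hj)
  rw [interpolate_apply, eval_finsetSum, mul_assoc, Finset.mul_sum, Finset.mul_sum]
  refine (Finset.abs_sum_le_sum_abs _ _).trans (Finset.sum_le_sum fun i hi ↦ ?_)
  rw [eval_mul, eval_C, abs_mul]
  exact mul_le_mul (hr i hi) (hbasis i hi) (abs_nonneg _) ((abs_nonneg _).trans (hr i hi))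

theorem abs_nodalWeight_le_of_mul_abs_sub_le (hc : 0 < c) (hu : InjOn u s)
    (h : ∀ i ∈ s, ∀ j ∈ s, c * |u i - u j| ≤ |v i - v j|) {i : ι} (hi : i ∈ s) :
    |nodalWeight s v i| ≤ c⁻¹ ^ (s.card - 1) * |nodalWeight s u i| := by
  rw [nodalWeight, nodalWeight, Finset.abs_prod, Finset.abs_prod, ← Finset.card_erase_of_mem hi,
    ← Finset.prod_const, ← Finset.prod_mul_distrib]
  refine Finset.prod_le_prod (fun _ _ ↦ abs_nonneg _) fun j hj ↦ ?_
  obtain ⟨hji, hj⟩ := Finset.mem_erase.1 hj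
  have hpos : 0 < |u i - u j| := abs_pos.2 (sub_ne_zero.2 fun hij ↦ hji (hu hj hi hij.symm))
  rw [abs_inv, abs_inv, ← mul_inv]
  gcongr
  exact h i hi j hj

theorem exists_sub_eval_interpolate_eq {f : ℝ → ℝ} (hf : ContDiff ℝ s.card f) {v : ι → ℝ}
    (hv : InjOn v s) {I : Set ℝ} [I.OrdConnected] (hvI : ∀ i ∈ s, v i ∈ I) {x : ℝ} (hx : x ∈ I) :
    ∃ ξ ∈ I, f x - (interpolate s v fun i ↦ f (v i)).eval x =
      iteratedDeriv s.card f ξ / s.card ! * (nodal s v).eval x := by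
  set Q := interpolate s v fun i ↦ f (v i)
  set N := nodal s v
  have hQ_node : ∀ i ∈ s, Q.eval (v i) = f (v i) := fun i hi ↦
    eval_interpolate_at_node _ hv hi
  have hN_node : ∀ i ∈ s, N.eval (v i) = 0 := fun i hi ↦ eval_nodal_at_node hi
  by_cases hxv : ∃ i ∈ s, v i = x
  · obtain ⟨i, hi, rfl⟩ := hxv
    exact ⟨v i, hx, by rw [hQ_node i hi, hN_node i hi, sub_self, mul_zero]⟩
  have hNx : N.eval x ≠ 0 := eval_nodal_not_at_node fun i hi h ↦ hxv ⟨i, hi, h.symm⟩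
  -- The multiple of the nodal polynomial that makes `f - R` vanish at `x` as well.
  set c := (f x - Q.eval x) / N.eval x with hc
  set R := Q + C c * N with hR
  have hR_deriv : derivative^[s.card] R = C (c * s.card !) := by
    rw [hR, iterate_map_add, iterate_derivative_C_mul, iterate_derivative_nodal,
      iterate_derivative_eq_zero_of_degree_lt (degree_interpolate_lt _ hv), zero_add, C_mul]
  have hR_smooth : ContDiff ℝ s.card fun z ↦ R.eval z := R.contDiff_aeval _
  have hx_notMem : x ∉ s.image v := by simpa using hxv
  have hzero : ∀ z ∈ insert x (s.image v), f z - R.eval z = 0 := by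
    simp only [Finset.forall_mem_insert, Finset.forall_mem_image, hR, eval_add, eval_mul, eval_C]
    refine ⟨?_, fun i hi ↦ by rw [hQ_node i hi, hN_node i hi, mul_zero, add_zero, sub_self]⟩
    rw [hc, div_mul_cancel₀ _ hNx, add_sub_cancel, sub_self]
  obtain ⟨ξ, hξ, hξ_zero⟩ := exists_iteratedDeriv_eq_zero_of_card_eq (I := I)
    (hf.sub hR_smooth)
    (by rw [Finset.card_insert_of_notMem hx_notMem, Finset.card_image_of_injOn hv])
    (by simpa using ⟨hx, hvI⟩) hzero
  rw [iteratedDeriv_fun_sub hf.contDiffAt hR_smooth.contDiffAt, iteratedDeriv_polynomial_eval,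
    hR_deriv, eval_C, sub_eq_zero] at hξ_zero
  refine ⟨ξ, hξ, ?_⟩
  rw [hξ_zero, hc, mul_div_cancel_right₀ _ (by positivity), div_mul_cancel₀ _ hNx]

theorem sum_abs_nodalWeight_chebyshev_node (k : ℕ) :
    ∑ i ∈ Finset.range (k + 1), |nodalWeight (Finset.range (k + 1)) (Chebyshev.node k) i| =
      2 ^ (k - 1) := by
  have hcoeff : (Chebyshev.T ℝ k).coeff k = 2 ^ (k - 1) := by
    trans (Chebyshev.T ℝ k).leadingCoeff
    · simp [leadingCoeff]
    · simp
  have hsum := coeff_eq_sum (P := Chebyshev.T ℝ k) (Chebyshev.strictAntiOn_node k).injOn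
    (by rw [Chebyshev.degree_T, Finset.card_range]; exact_mod_cast k.lt_succ_self)
  rw [Finset.card_range, Nat.add_sub_cancel, hcoeff] at hsum
  rw [hsum]
  refine Finset.sum_congr rfl fun i hi ↦ ?_
  have hik : i ≤ k := Nat.lt_succ_iff.1 (Finset.mem_range.1 hi)
  -- The sign `(-1) ^ i` of `T k` at the node is also the sign of the product of differences.
  have habs := abs_of_pos (Chebyshev.zero_lt_prod_node_sub_node hik)
  rw [abs_mul, abs_neg_one_pow, one_mul] at habs
  rw [nodalWeight, Finset.prod_inv_distrib, abs_inv, habs, mul_inv,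
    Chebyshev.eval_T_real_node (by simpa using hik), ← inv_pow, inv_neg_one, div_eq_mul_inv]

end Interpolation

section Markov

open Polynomial
open scoped Nat

theorem iterate_derivative_comp_linear {R : Type*} [CommSemiring R] (P : R[X]) (α β : R) (j : ℕ) :
    derivative^[j] (P.comp (C α * X + C β)) =
      C (α ^ j) * (derivative^[j] P).comp (C α * X + C β) := by
  induction j with
  | zero => simp
  | succ j ih =>
    rw [Function.iterate_succ_apply', ih, Function.iterate_succ_apply', derivative_C_mul,
      derivative_comp, derivative_add, derivative_C_mul, derivative_X, derivative_C, pow_succ,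
      C_mul]
    ring

variable {n : ℕ} {P : ℝ[X]}

theorem abs_eval_iterate_derivative_one_le (hdeg : P.natDegree ≤ n)
    (hP : ∀ x ∈ Icc (-1 : ℝ) 1, |P.eval x| ≤ 1) (j : ℕ) :
    |(derivative^[j] P).eval 1| ≤ (derivative^[j] (Chebyshev.T ℝ n)).eval 1 := by
  have hdeg' : P.degree ≤ n := natDegree_le_iff_degree_le.1 hdeg
  have hneg := Chebyshev.eval_iterate_derivative_le_of_forall_abs_le_one (P := -P) (k := j)
    le_rfl (by rwa [degree_neg]) (by simpa only [eval_neg, abs_neg] using hP)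
  rw [iterate_derivative_neg, eval_neg] at hneg
  exact abs_le'.2 ⟨Chebyshev.eval_iterate_derivative_le_of_forall_abs_le_one le_rfl hdeg' hP, hneg⟩

theorem abs_pow_mul_abs_eval_iterate_derivative_add_le (hdeg : P.natDegree ≤ n)
    (hP : ∀ x ∈ Icc (-1 : ℝ) 1, |P.eval x| ≤ 1) {α β : ℝ} (hαβ : |α| + |β| ≤ 1) (j : ℕ) :
    |α| ^ j * |(derivative^[j] P).eval (α + β)| ≤
      (derivative^[j] (Chebyshev.T ℝ n)).eval 1 := by
  have hcomp_deg : (P.comp (C α * X + C β)).natDegree ≤ n := by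
    rw [natDegree_comp]
    exact (Nat.mul_le_mul hdeg natDegree_linear_le).trans_eq (mul_one n)
  have hcomp_le : ∀ x ∈ Icc (-1 : ℝ) 1, |(P.comp (C α * X + C β)).eval x| ≤ 1 := by
    intro x hx
    have hmem : |α * x + β| ≤ 1 := calc
      |α * x + β| ≤ |α| * |x| + |β| := (abs_add_le _ _).trans_eq (by rw [abs_mul])
      _ ≤ |α| + |β| := by grw [abs_le.2 hx, mul_one]
      _ ≤ 1 := hαβ
    simpa using hP _ (abs_le.1 hmem)
  simpa [iterate_derivative_comp_linear, abs_mul] using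
    abs_eval_iterate_derivative_one_le hcomp_deg hcomp_le j

theorem abs_eval_iterate_derivative_le_two_pow_mul (hdeg : P.natDegree ≤ n)
    (hP : ∀ x ∈ Icc (-1 : ℝ) 1, |P.eval x| ≤ 1) (j : ℕ) {x : ℝ} (hx : x ∈ Icc (-1 : ℝ) 1) :
    |(derivative^[j] P).eval x| ≤ 2 ^ j * (derivative^[j] (Chebyshev.T ℝ n)).eval 1 := by
  -- An affine map of slope of modulus at least `1 / 2` sends `[-1, 1]` into itself and `1` to `x`.
  obtain ⟨α, β, hα, hαβ, rfl⟩ : ∃ α β : ℝ, 1 ≤ 2 * |α| ∧ |α| + |β| ≤ 1 ∧ α + β = x := by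
    rcases le_total 0 x with h | h
    · exact ⟨(1 + x) / 2, (x - 1) / 2, by grind, by grind, by ring⟩
    · exact ⟨(x - 1) / 2, (1 + x) / 2, by grind, by grind, by ring⟩
  calc |(derivative^[j] P).eval (α + β)|
      ≤ (2 * |α|) ^ j * |(derivative^[j] P).eval (α + β)| :=
        le_mul_of_one_le_left (abs_nonneg _) (one_le_pow₀ hα)
    _ = 2 ^ j * (|α| ^ j * |(derivative^[j] P).eval (α + β)|) := by rw [mul_pow, mul_assoc]
    _ ≤ 2 ^ j * (derivative^[j] (Chebyshev.T ℝ n)).eval 1 := by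
        grw [abs_pow_mul_abs_eval_iterate_derivative_add_le hdeg hP hαβ j]

theorem iterate_derivative_T_eval_one_nonneg (n j : ℕ) :
    0 ≤ (derivative^[j] (Chebyshev.T ℝ n)).eval 1 :=
  (abs_nonneg _).trans (abs_eval_iterate_derivative_one_le (P := 0) (by simp) (by simp) j)

theorem two_mul_factorial_mul_iterate_derivative_T_eval_one_le (n j : ℕ) :
    (2 * j)! * (derivative^[j] (Chebyshev.T ℝ n)).eval 1 ≤ (2 * (n : ℝ) ^ 2) ^ j * j ! := by
  induction j with
  | zero => simp
  | succ j ih =>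
    have hrec := Chebyshev.iterate_derivative_T_eval_one_recurrence (R := ℝ) n j
    have hnonneg := iterate_derivative_T_eval_one_nonneg n j
    set A := (derivative^[j] (Chebyshev.T ℝ n)).eval 1
    set B := (derivative^[j + 1] (Chebyshev.T ℝ n)).eval 1
    have hB : (2 * j + 1) * B ≤ n ^ 2 * A := by
      rw [hrec]
      gcongr
      simp
    calc ((2 * (j + 1))! : ℝ) * B = 2 * (j + 1) * (2 * j)! * ((2 * j + 1) * B) := by
          rw [show 2 * (j + 1) = 2 * j + 1 + 1 by ring, Nat.factorial_succ, Nat.factorial_succ]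
          push_cast
          ring
      _ ≤ 2 * (j + 1) * (2 * j)! * (n ^ 2 * A) := by gcongr
      _ = 2 * (j + 1) * n ^ 2 * ((2 * j)! * A) := by ring
      _ ≤ 2 * (j + 1) * n ^ 2 * ((2 * (n : ℝ) ^ 2) ^ j * j !) := by gcongr
      _ = (2 * (n : ℝ) ^ 2) ^ (j + 1) * (j + 1)! := by
          rw [Nat.factorial_succ]
          push_cast
          ring

theorem abs_eval_iterate_derivative_le (hdeg : P.natDegree ≤ n)
    (hP : ∀ x ∈ Icc (-1 : ℝ) 1, |P.eval x| ≤ 1) (j : ℕ) {x : ℝ} (hx : x ∈ Icc (-1 : ℝ) 1) :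
    |(derivative^[j] P).eval x| ≤ (4 * (n : ℝ) ^ 2) ^ j * j ! / (2 * j)! := by
  have hT : (derivative^[j] (Chebyshev.T ℝ n)).eval 1 ≤ (2 * (n : ℝ) ^ 2) ^ j * j ! / (2 * j)! := by
    rw [le_div_iff₀' (by positivity)]
    exact two_mul_factorial_mul_iterate_derivative_T_eval_one_le n j
  calc |(derivative^[j] P).eval x| ≤ 2 ^ j * (derivative^[j] (Chebyshev.T ℝ n)).eval 1 :=
        abs_eval_iterate_derivative_le_two_pow_mul hdeg hP j hx
    _ ≤ 2 ^ j * ((2 * (n : ℝ) ^ 2) ^ j * j ! / (2 * j)!) := by gcongr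
    _ = (4 * (n : ℝ) ^ 2) ^ j * j ! / (2 * j)! := by
        rw [← mul_div_assoc, ← mul_assoc, ← mul_pow]
        ring_nf

theorem four_mul_pow_two_mul_le {j : ℕ} (hj : j ≠ 0) :
    4 * (j : ℝ) ^ (2 * j) ≤ (2 * j)! * Real.exp 1 ^ j := by
  have hj1 : (1 : ℝ) ≤ j := Nat.one_le_cast.2 (Nat.pos_of_ne_zero hj)
  have he : Real.exp 1 < 3 := Real.exp_one_lt_three
  have hsqrt : 3 ≤ √(2 * Real.pi * (2 * j : ℕ)) := by
    refine Real.le_sqrt_of_sq_le ?_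
    push_cast
    nlinarith [Real.pi_gt_three]
  have hbase : 4 / 3 ≤ (4 / Real.exp 1) ^ j := calc
    4 / 3 ≤ 4 / Real.exp 1 := by gcongr
    _ ≤ (4 / Real.exp 1) ^ j := le_self_pow₀ ((one_le_div₀ (Real.exp_pos 1)).2 (by linarith)) hj
  calc 4 * (j : ℝ) ^ (2 * j) = 3 * (4 / 3) * (j : ℝ) ^ (2 * j) := by norm_num
    _ ≤ √(2 * Real.pi * (2 * j : ℕ)) * (4 / Real.exp 1) ^ j * (j : ℝ) ^ (2 * j) := by gcongr
    _ = √(2 * Real.pi * (2 * j : ℕ)) * ((2 * j : ℕ) / Real.exp 1) ^ (2 * j) * Real.exp 1 ^ j := by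
        push_cast
        rw [div_pow, div_pow, mul_pow, pow_mul 2 2 j, pow_mul (Real.exp 1), pow_two (Real.exp 1),
          mul_pow (Real.exp 1)]
        field_simp
        norm_num
    _ ≤ (2 * j)! * Real.exp 1 ^ j := by grw [Stirling.le_factorial_stirling]

end Markov

section Spreading

/-- The volume of the part of `K` in `(-∞, t]`: as a function of `t`, a contraction along which
points of `[0, |K|]` lift to points of `K`. The value is `0` where that volume is infinite. -/
noncomputable def volumeBelow (K : Set ℝ) (t : ℝ) : ℝ := volume.real (K ∩ Iic t)

variable {K : Set ℝ}

theorem lipschitzWith_volumeBelow (hK : volume K ≠ ⊤) : LipschitzWith 1 (volumeBelow K) := by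
  refine LipschitzWith.of_le_add fun t s ↦ ?_
  have hcover : K ∩ Iic t ⊆ K ∩ Iic s ∪ Ioc s t := fun z hz ↦
    (le_or_gt z s).imp (fun h ↦ ⟨hz.1, h⟩) fun h ↦ ⟨h, hz.2⟩
  have hfin : volume (K ∩ Iic s) ≠ ⊤ := measure_ne_top_of_subset inter_subset_left hK
  calc volumeBelow K t ≤ volume.real (K ∩ Iic s ∪ Ioc s t) :=
        measureReal_mono hcover (measure_union_ne_top hfin measure_Ioc_lt_top.ne)
    _ ≤ volumeBelow K s + volume.real (Ioc s t) := measureReal_union_le _ _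
    _ ≤ volumeBelow K s + dist t s := by
        rw [Real.volume_real_Ioc, Real.dist_eq]
        gcongr
        exact max_le (le_abs_self _) (abs_nonneg _)

theorem surjOn_volumeBelow (hK : IsCompact K) (hne : K.Nonempty) :
    SurjOn (volumeBelow K) K (Icc 0 (volume.real K)) := by
  obtain ⟨a, haK, ha⟩ := hK.exists_isLeast hne
  obtain ⟨b, hbK, hb⟩ := hK.exists_isGreatest hne
  have hFa : volumeBelow K a = 0 := by
    have hsub : K ∩ Iic a ⊆ {a} := fun z hz ↦ le_antisymm hz.2 (ha hz.1)
    simp [volumeBelow, measureReal_def, measure_mono_null hsub]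
  have hFb : volumeBelow K b = volume.real K := by
    rw [volumeBelow, inter_eq_left.2 (show K ⊆ Iic b from hb)]
  have hcont := (lipschitzWith_volumeBelow hK.measure_lt_top.ne).continuous
  intro s hs
  obtain ⟨t, ht, rfl⟩ := intermediate_value_Icc (ha hbK) hcont.continuousOn
    (hFa.symm ▸ hFb.symm ▸ hs)
  -- The last point of `K` before `t` has the same volume of `K` below it.
  obtain ⟨c, hc, hc_max⟩ := (hK.inter_right isClosed_Iic).exists_isGreatest ⟨a, haK, ht.1⟩
  refine ⟨c, hc.1, congrArg volume.real (Subset.antisymm ?_ fun z hz ↦ ⟨hz.1, hc_max hz⟩)⟩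
  exact inter_subset_inter_right K (Iic_subset_Iic.2 hc.2)

theorem exists_forall_mem_forall_mul_abs_sub_le (hK : IsCompact K) (hne : K.Nonempty) {ι : Type*}
    {u : ι → ℝ} (hu : ∀ i, u i ∈ Icc (-1 : ℝ) 1) :
    ∃ v : ι → ℝ, (∀ i, v i ∈ K) ∧
      ∀ i j, volume.real K / 2 * |u i - u j| ≤ |v i - v j| := by
  have hmem (i : ι) : volume.real K / 2 * (1 + u i) ∈ Icc 0 (volume.real K) := by
    have hm : 0 ≤ volume.real K := measureReal_nonneg
    obtain ⟨hu_ge, hu_le⟩ := hu i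
    exact ⟨mul_nonneg (by positivity) (by linarith), by nlinarith⟩
  choose v hvK hv using fun i ↦ surjOn_volumeBelow hK hne (hmem i)
  refine ⟨v, hvK, fun i j ↦ ?_⟩
  calc volume.real K / 2 * |u i - u j| = dist (volumeBelow K (v i)) (volumeBelow K (v j)) := by
        rw [hv, hv, Real.dist_eq, ← mul_sub, abs_mul,
          abs_of_nonneg (div_nonneg measureReal_nonneg zero_le_two),
          add_sub_add_left_eq_sub]
    _ ≤ |v i - v j| := by
        simpa [Real.dist_eq] using
          (lipschitzWith_volumeBelow hK.measure_lt_top.ne).dist_le_mul (v i) (v j)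

end Spreading

section Estimate

open Polynomial Lagrange
open scoped Nat

theorem exists_nodes_sum_abs_nodalWeight_le {E : Set ℝ} (hbdd : Bornology.IsBounded E)
    (hE : 0 < volume.real E) (k : ℕ) :
    ∃ v : ℕ → ℝ, (∀ i, v i ∈ closure E) ∧ InjOn v (Finset.range (k + 1)) ∧
      ∑ i ∈ Finset.range (k + 1), |nodalWeight (Finset.range (k + 1)) v i| ≤
        (4 / volume.real E) ^ k := by
  have hcompact : IsCompact (closure E) := hbdd.isCompact_closure
  have hne : E.Nonempty := nonempty_of_measureReal_ne_zero hE.ne'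
  have hmono : volume.real E ≤ volume.real (closure E) :=
    measureReal_mono subset_closure hcompact.measure_lt_top.ne
  obtain ⟨v, hvE, hspread⟩ := exists_forall_mem_forall_mul_abs_sub_le hcompact hne.closure
    (u := Chebyshev.node k) fun _ ↦ Chebyshev.node_mem_Icc
  have hc : 0 < volume.real E / 2 := half_pos hE
  have hnode : InjOn (Chebyshev.node k) (Finset.range (k + 1)) :=
    (Chebyshev.strictAntiOn_node k).injOn
  have hsep (i j : ℕ) :
      volume.real E / 2 * |Chebyshev.node k i - Chebyshev.node k j| ≤ |v i - v j| := by
    grw [hmono]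
    exact hspread i j
  refine ⟨v, hvE, injOn_of_mul_abs_sub_le hc hnode fun i _ j _ ↦ hsep i j, ?_⟩
  calc ∑ i ∈ Finset.range (k + 1), |nodalWeight (Finset.range (k + 1)) v i|
      ≤ ∑ i ∈ Finset.range (k + 1), (volume.real E / 2)⁻¹ ^ k *
          |nodalWeight (Finset.range (k + 1)) (Chebyshev.node k) i| := by
        gcongr with i hi
        simpa using abs_nodalWeight_le_of_mul_abs_sub_le hc hnode (fun i _ j _ ↦ hsep i j) hi
    _ = (2 / volume.real E) ^ k * 2 ^ (k - 1) := by
        rw [← Finset.mul_sum, sum_abs_nodalWeight_chebyshev_node, inv_div]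
    _ ≤ (2 / volume.real E) ^ k * 2 ^ k := by
        gcongr
        · exact one_le_two
        · exact k.sub_le 1
    _ = (4 / volume.real E) ^ k := by
        rw [← mul_pow]
        ring

theorem pow_div_factorial_two_mul_le {y : ℝ} (hy : 0 ≤ y) (k : ℕ) :
    (4 * y) ^ (k + 1) / (2 * (k + 1))! ≤
      4 ^ k * (Real.exp 1 * y / ((k : ℝ) + 1) ^ 2) ^ (k + 1) := by
  have h := four_mul_pow_two_mul_le k.succ_ne_zero
  push_cast at h
  calc (4 * y) ^ (k + 1) / (2 * (k + 1))! = 4 ^ k * y ^ (k + 1) * (4 / (2 * (k + 1))!) := by ring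
    _ ≤ 4 ^ k * y ^ (k + 1) * (Real.exp 1 ^ (k + 1) / ((k : ℝ) + 1) ^ (2 * (k + 1))) := by
        gcongr ?_ * ?_
        rw [div_le_div_iff₀ (by positivity) (by positivity)]
        exact h.trans_eq (mul_comm _ _)
    _ = 4 ^ k * (Real.exp 1 * y / ((k : ℝ) + 1) ^ 2) ^ (k + 1) := by
        rw [div_pow, mul_pow, ← pow_mul]
        ring

variable {n : ℕ} {P : ℝ[X]} {a b x : ℝ}

theorem abs_eval_sub_eval_interpolate_le (hdeg : P.natDegree ≤ n)
    (hP : ∀ x ∈ Icc (-1 : ℝ) 1, |P.eval x| ≤ 1) (hI : Icc a b ⊆ Icc (-1) 1)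
    {ι : Type*} [DecidableEq ι] {s : Finset ι} {v : ι → ℝ} (hv : InjOn v s)
    (hvI : ∀ i ∈ s, v i ∈ Icc a b) (hx : x ∈ Icc a b) :
    |P.eval x - (interpolate s v fun i ↦ P.eval (v i)).eval x| ≤
      (4 * ((b - a) * (n : ℝ) ^ 2)) ^ s.card / (2 * s.card)! := by
  obtain ⟨ξ, hξ, herr⟩ := exists_sub_eval_interpolate_eq (f := fun z ↦ P.eval z)
    (P.contDiff_aeval _) hv hvI hx
  have hderiv := abs_eval_iterate_derivative_le hdeg hP s.card (hI hξ)
  have hnodal : |(nodal s v).eval x| ≤ (b - a) ^ s.card :=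
    abs_eval_nodal_le fun i hi ↦ Real.dist_le_of_mem_Icc hx (hvI i hi)
  rw [herr, iteratedDeriv_polynomial_eval, abs_mul, abs_div, Nat.abs_cast]
  calc |(derivative^[s.card] P).eval ξ| / s.card ! * |(nodal s v).eval x|
      ≤ (4 * (n : ℝ) ^ 2) ^ s.card * s.card ! / (2 * s.card)! / s.card ! *
          (b - a) ^ s.card := by gcongr
    _ = (4 * ((b - a) * (n : ℝ) ^ 2)) ^ s.card / (2 * s.card)! := by
        simp only [mul_pow]
        field_simp

theorem polynomial_spreading_estimate_general (hdeg : P.natDegree ≤ n)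
    (hP : ∀ x ∈ Icc (-1 : ℝ) 1, |P.eval x| ≤ 1) {ε : ℝ} {E : Set ℝ} (hE : 0 < volume.real E)
    (hPE : ∀ x ∈ E, |P.eval x| ≤ ε) (hEI : E ⊆ Icc a b) (hI : Icc a b ⊆ Icc (-1) 1) (k : ℕ)
    (hx : x ∈ Icc a b) :
    |P.eval x| ≤ (4 * ((b - a) / volume.real E)) ^ k *
      (ε + (Real.exp 1 * (b - a) * (n : ℝ) ^ 2 / ((k : ℝ) + 1) ^ 2) ^ (k + 1)) := by
  have hab : a ≤ b := hx.1.trans hx.2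
  obtain ⟨v, hvE, hv, hweights⟩ :=
    exists_nodes_sum_abs_nodalWeight_le ((Metric.isBounded_Icc a b).subset hEI) hE k
  have hvI (i : ℕ) : v i ∈ Icc a b := closure_minimal hEI isClosed_Icc (hvE i)
  have hPv (i : ℕ) : |P.eval (v i)| ≤ ε :=
    closure_minimal hPE (isClosed_le P.continuous.abs continuous_const) (hvE i)
  have hε : 0 ≤ ε := (abs_nonneg _).trans (hPv 0)
  set Q := interpolate (Finset.range (k + 1)) v fun i ↦ P.eval (v i)
  set S := (Real.exp 1 * (b - a) * (n : ℝ) ^ 2 / ((k : ℝ) + 1) ^ 2) ^ (k + 1) with hS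
  have hba : 0 ≤ b - a := sub_nonneg.2 hab
  have hinterp : |Q.eval x| ≤ (4 * ((b - a) / volume.real E)) ^ k * ε := calc
    |Q.eval x| ≤ ε * (b - a) ^ k * (4 / volume.real E) ^ k := by
      grw [abs_eval_interpolate_le (fun i _ ↦ hPv i) fun i _ ↦ Real.dist_le_of_mem_Icc hx (hvI i),
        hweights, Finset.card_range, Nat.add_sub_cancel]
    _ = (4 * ((b - a) / volume.real E)) ^ k * ε := by
      rw [mul_assoc, ← mul_pow]
      ring
  have herr : |P.eval x - Q.eval x| ≤ (4 * ((b - a) / volume.real E)) ^ k * S := by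
    have hη : 1 ≤ (b - a) / volume.real E := by
      rw [one_le_div₀ hE, ← Real.volume_real_Icc_of_le hab]
      exact measureReal_mono hEI measure_Icc_lt_top.ne
    calc |P.eval x - Q.eval x| ≤ (4 * ((b - a) * (n : ℝ) ^ 2)) ^ (k + 1) / (2 * (k + 1))! := by
          simpa only [Finset.card_range] using
            abs_eval_sub_eval_interpolate_le hdeg hP hI hv (fun i _ ↦ hvI i) hx
      _ ≤ 4 ^ k * S := by
          simpa only [hS, mul_assoc] using pow_div_factorial_two_mul_le (by positivity) k
      _ ≤ (4 * ((b - a) / volume.real E)) ^ k * S := by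
          gcongr
          linarith
  calc |P.eval x| ≤ |Q.eval x| + |P.eval x - Q.eval x| := by
        simpa using abs_add_le (Q.eval x) (P.eval x - Q.eval x)
    _ ≤ (4 * ((b - a) / volume.real E)) ^ k * (ε + S) := by
        rw [mul_add]
        exact add_le_add hinterp herr

end Estimate

theorem polynomial_spreading_estimate
    (n : ℕ) (hn : 0 < n) (P : Polynomial ℝ) (hdeg : P.natDegree ≤ n)
    (hP : ∀ x ∈ Set.Icc (-1:ℝ) 1, |P.eval x| ≤ 1)
    (δ : ℝ) (hδ : 0 < δ)
    (E : Set ℝ) (hEmeas : MeasurableSet E) (hEsub : E ⊆ Set.Icc (-1:ℝ) 1)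
    (hEpos : 0 < (volume E).toReal)
    (hPE : ∀ x ∈ E, |P.eval x| ≤ Real.exp (-δ * n))
    (a b : ℝ) (hab : a ≤ b) (hEI : E ⊆ Set.Icc a b)
    (hI : Set.Icc a b ⊆ Set.Icc (-1:ℝ) 1)
    (k : ℕ) :
    ∀ x ∈ Set.Icc a b,
      |P.eval x| ≤ (4 * ((b - a) / (volume E).toReal)) ^ k *
        (Real.exp (-δ * n) +
          (Real.exp 1 * (b - a) * (n : ℝ) ^ 2 / ((k : ℝ) + 1) ^ 2) ^ (k + 1)) := by
  exact fun _ hx ↦ polynomial_spreading_estimate_general hdeg hP hEpos hPE hEI hI k hx
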